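/- Let k > 5 and let (g_1,…,g_k) and (h_1,…,h_k) be elements of the Nielsen class Ni(A6, C_{2×2}^k) such that g_1 ≠ g_2, Fix(g_1) = Fix(g_2), h_1 ≠ h_2, and Fix(h_1) = Fix(h_2) (so that both tuples admit a 1-reduction in their first two entries). If the reduced (k−1)-tuples (g_1 g_2, g_3,…,g_k) and (h_1 h_2, h_3,…,h_k) are Hurwitz-equivalent, then (g_1,…,g_k) and (h_1,…,h_k) are Hurwitz-equivalent. -/

import Mathlib

/-- The `i`-th Hurwitz move on `k`-tuples of elements of a group `G`:
`(g₁,…,gₖ) ↦ (g₁,…,g_{i-1}, g_{i+1}, g_{i+1}⁻¹ g_i g_{i+1}, g_{i+2},…,gₖ)`. -/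
def HurwitzMove {G : Type*} [Group G] {k : ℕ} (g h : Fin k → G) : Prop :=
  ∃ i : ℕ, ∃ hi : i + 1 < k,
    h ⟨i, Nat.lt_of_succ_lt hi⟩ = g ⟨i + 1, hi⟩ ∧
    h ⟨i + 1, hi⟩ = (g ⟨i + 1, hi⟩)⁻¹ * g ⟨i, Nat.lt_of_succ_lt hi⟩ * g ⟨i + 1, hi⟩ ∧
    ∀ j : Fin k, (j : ℕ) ≠ i → (j : ℕ) ≠ i + 1 → h j = g j

/-- Hurwitz equivalence: the equivalence relation generated by the Hurwitz moves. -/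
def HurwitzEquiv {G : Type*} [Group G] {k : ℕ} (g h : Fin k → G) : Prop :=
  Relation.EqvGen HurwitzMove g h

/-- The Nielsen class `Ni(A₆, C_{2×2}^k)`: `k`-tuples of order-2 elements of `A₆`
(products of two disjoint transpositions) with product `1` generating `A₆`. -/
def NielsenSet (k : ℕ) : Set (Fin k → Equiv.Perm (Fin 6)) :=
  {g | (∀ i, g i ∈ alternatingGroup (Fin 6)) ∧ (∀ i, orderOf (g i) = 2) ∧
       (List.ofFn g).prod = 1 ∧
       Subgroup.closure (Set.range g) = alternatingGroup (Fin 6)}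

/-- One step of the absolute equivalence: a Hurwitz move, or simultaneous
conjugation of all entries by a single element of `S₆`. -/
def AbsRel (k : ℕ) (g h : Fin k → Equiv.Perm (Fin 6)) : Prop :=
  HurwitzMove g h ∨ ∃ s : Equiv.Perm (Fin 6), h = fun i => s⁻¹ * g i * s

/-- One step of the inner equivalence: a Hurwitz move, or simultaneous
conjugation of all entries by a single element of `A₆`. -/
def InnerRel (k : ℕ) (g h : Fin k → Equiv.Perm (Fin 6)) : Prop :=
  HurwitzMove g h ∨
    ∃ s ∈ alternatingGroup (Fin 6), h = fun i => s⁻¹ * g i * s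

/-- The set of fixed points of a permutation. -/
def FixedPts {n : ℕ} (g : Equiv.Perm (Fin n)) : Set (Fin n) := {x | g x = x}

/-!
Undoing a 1-reduction replaces one strand of the reduced tuple by a cable of two commuting double
transpositions with the same fixed points, unique up to order. So a braid between the reduced
tuples lifts to the cabled tuples, and the only question is which strand of the reduced tuple gets
cabled. Call two strands linked if cabling either of them gives equivalent tuples. If the product
of two strands has odd order, repeated swaps of the two exchange their labels and keep their
values, so they are linked.

If some strand were not linked to another one, the strands linked to it would be separated from the
remaining ones: across the two sides, in the whole braid orbit, all products would have even order.
In `A₆` this is so restrictive that, for some tuple in the orbit, a nontrivial permutation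
commutes with all strands and all cables of the strands on one of the two sides. This contradicts
the triviality of the centralizer of the cabled tuples.
-/

section Braid

variable {α β : Type*} {op : α → α → α} {op' : β → β → β} {L M N : List α}

/-- A Hurwitz move on lists: two neighbouring strands `a`, `b` become `b`, `op a b`. -/
inductive BraidStep (op : α → α → α) : List α → List α → Prop
  | swap (l : List α) (a b : α) (r : List α) :
      BraidStep op (l ++ a :: b :: r) (l ++ b :: op a b :: r)

/-- The equivalence relation on lists generated by the Hurwitz moves for the operation `op`. -/
def BraidEquiv (op : α → α → α) : List α → List α → Prop :=
  Relation.EqvGen (BraidStep op)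

namespace BraidEquiv

theorem refl (L : List α) : BraidEquiv op L L :=
  Relation.EqvGen.refl L

theorem symm (h : BraidEquiv op L M) : BraidEquiv op M L :=
  Relation.EqvGen.symm _ _ h

theorem trans (h : BraidEquiv op L M) (h' : BraidEquiv op M N) : BraidEquiv op L N :=
  Relation.EqvGen.trans _ _ _ h h'

theorem of_step (h : BraidStep op L M) : BraidEquiv op L M :=
  Relation.EqvGen.rel _ _ h

theorem swap (a b : α) (r : List α) : BraidEquiv op (a :: b :: r) (b :: op a b :: r) :=
  of_step (.swap [] a b r)

theorem lift (F : List α → List β) (hF : ∀ L M, BraidStep op L M → BraidEquiv op' (F L) (F M))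
    (h : BraidEquiv op L M) : BraidEquiv op' (F L) (F M) := by
  induction h with
  | rel L M h => exact hF L M h
  | refl L => exact refl _
  | symm L M _ ih => exact ih.symm
  | trans L M N _ _ ih ih' => exact ih.trans ih'

theorem iff_of_step {P : List α → Prop} (hP : ∀ L M, BraidStep op L M → (P L ↔ P M))
    (h : BraidEquiv op L M) : P L ↔ P M := by
  induction h with
  | rel L M h => exact hP L M h
  | refl L => exact Iff.rfl
  | symm L M _ ih => exact ih.symm
  | trans L M N _ _ ih ih' => exact ih.trans ih'

theorem length_eq (h : BraidEquiv op L M) : L.length = M.length := by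
  have key : L.length = L.length ↔ M.length = L.length :=
    h.iff_of_step (P := fun N => N.length = L.length) <| by
      rintro _ _ ⟨l, a, b, r⟩
      simp
  exact (key.1 rfl).symm

theorem append_left (l : List α) (h : BraidEquiv op L M) : BraidEquiv op (l ++ L) (l ++ M) := by
  refine h.lift (l ++ ·) ?_
  rintro _ _ ⟨l', a, b, r⟩
  simpa only [List.append_assoc] using of_step (.swap (l ++ l') a b r)

theorem append_right (h : BraidEquiv op L M) (r : List α) : BraidEquiv op (L ++ r) (M ++ r) := by
  refine h.lift (· ++ r) ?_
  rintro _ _ ⟨l, a, b, r'⟩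
  simpa only [List.append_assoc, List.cons_append] using of_step (.swap l a b (r' ++ r))

theorem cons (a : α) (h : BraidEquiv op L M) : BraidEquiv op (a :: L) (a :: M) :=
  h.append_left [a]

theorem pull (l : List α) (b : α) (r : List α) :
    BraidEquiv op (l ++ b :: r) (b :: (l.map (op · b) ++ r)) := by
  induction l with
  | nil => exact refl _
  | cons a l ih => exact (ih.cons a).trans (swap a b _)

theorem exists_pull_pair {p q : α} (hp : p ∈ L) (hq : q ∈ L) (hpq : p ≠ q) :
    ∃ r, BraidEquiv op L (p :: q :: r) ∨ BraidEquiv op L (q :: p :: r) := by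
  have pull_both (l m r : List α) (a b : α) :
      ∃ s, BraidEquiv op (l ++ a :: (m ++ b :: r)) (a :: b :: s) := by
    have hb := pull (op := op) (l.map (op · a) ++ m) b r
    rw [List.append_assoc] at hb
    exact ⟨_, (pull l a _).trans (hb.cons a)⟩
  obtain ⟨l, r, rfl⟩ := List.append_of_mem hp
  rcases List.mem_append.1 hq with hq | hq
  · obtain ⟨l, m, rfl⟩ := List.append_of_mem hq
    obtain ⟨s, hs⟩ := pull_both l m r q p
    exact ⟨s, .inr (by simpa only [List.append_assoc, List.cons_append] using hs)⟩
  · obtain ⟨m, r, rfl⟩ := List.append_of_mem ((List.mem_cons.1 hq).resolve_left hpq.symm)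
    obtain ⟨s, hs⟩ := pull_both l m r p q
    exact ⟨s, .inl hs⟩

end BraidEquiv

end Braid

section Tuples

variable {G : Type*} [Group G] {k : ℕ}

/-- Conjugation of `a` by `b`, written as in the Hurwitz moves. -/
def rightConj (a b : G) : G :=
  b⁻¹ * a * b

theorem rightConj_eq_mulAut_conj (a b : G) : rightConj a b = MulAut.conj b⁻¹ a := by
  simp only [rightConj, MulAut.conj_apply, inv_inv]

theorem BraidEquiv.centralizer_eq {L M : List G} (h : BraidEquiv rightConj L M) :
    Subgroup.centralizer {a | a ∈ L} = Subgroup.centralizer {a | a ∈ M} := by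
  ext x
  refine h.iff_of_step (P := fun L => x ∈ Subgroup.centralizer {a | a ∈ L}) ?_
  rintro _ _ ⟨l, a, b, r⟩
  have h_conj (hb : Commute b x) : Commute (rightConj a b) x ↔ Commute a x := by
    refine ⟨fun h => ?_, fun h => (hb.inv_left.mul_left h).mul_left hb⟩
    simpa only [rightConj, mul_assoc, mul_inv_cancel_left, mul_inv_cancel, mul_one] using
      (hb.mul_left h).mul_left hb.inv_left
  simp only [Subgroup.mem_centralizer_iff, Set.mem_ofPred_eq, List.forall_mem_append,
    List.forall_mem_cons, ← commute_iff_eq]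
  tauto

theorem HurwitzMove.braidStep {g h : Fin k → G} (H : HurwitzMove g h) :
    BraidStep rightConj (List.ofFn g) (List.ofFn h) := by
  obtain ⟨i, hi, h_left, h_right, h_rest⟩ := H
  have split_at (f : Fin k → G) : List.ofFn f = (List.ofFn f).take i ++
      f ⟨i, Nat.lt_of_succ_lt hi⟩ :: f ⟨i + 1, hi⟩ :: (List.ofFn f).drop (i + 2) := by
    conv_lhs => rw [← List.take_append_drop i (List.ofFn f)]
    rw [List.drop_eq_getElem_cons (by simp only [List.length_ofFn]; lia),
      List.drop_eq_getElem_cons (by simp only [List.length_ofFn]; lia)]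
    simp only [List.getElem_ofFn]
  have h_take : (List.ofFn h).take i = (List.ofFn g).take i :=
    List.ext_getElem (by simp only [List.length_take, List.length_ofFn]) fun n hn _ => by
      simp only [List.length_take, List.length_ofFn, lt_inf_iff] at hn
      simpa only [List.getElem_take, List.getElem_ofFn] using h_rest _ hn.1.ne (by grind)
  have h_drop : (List.ofFn h).drop (i + 2) = (List.ofFn g).drop (i + 2) :=
    List.ext_getElem (by simp only [List.length_drop, List.length_ofFn]) fun n _ _ => by
      simpa only [List.getElem_drop, List.getElem_ofFn] using
        h_rest _ (by grind) (by grind)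
  rw [split_at g, split_at h, h_take, h_drop, h_left, h_right]
  exact .swap _ _ _ _

theorem BraidStep.hurwitzMove {L M : List G} (H : BraidStep rightConj L M) (hL : L.length = k) :
    HurwitzMove (fun i : Fin k => L.getD i 1) (fun i : Fin k => M.getD i 1) := by
  obtain ⟨l, a, b, r⟩ := H
  have hl : l.length + 1 < k := by
    rw [← hL, List.length_append, List.length_cons, List.length_cons]
    lia
  refine ⟨l.length, hl, by simp, by simp [rightConj], fun j hj hj' => ?_⟩
  simp only [List.getD_eq_getElem?_getD, List.getElem?_append, List.getElem?_cons]
  grind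

theorem BraidEquiv.hurwitzEquiv {L M : List G} (H : BraidEquiv rightConj L M)
    (hL : L.length = k) :
    HurwitzEquiv (fun i : Fin k => L.getD i 1) (fun i : Fin k => M.getD i 1) := by
  induction H with
  | rel L M H => exact .rel _ _ (H.hurwitzMove hL)
  | refl L => exact .refl _
  | symm L M H ih => exact .symm _ _ (ih ((BraidEquiv.length_eq H).trans hL))
  | trans L M N H _ ih ih' =>
    exact .trans _ _ _ (ih hL) (ih' ((BraidEquiv.length_eq H).symm.trans hL))

theorem hurwitzEquiv_iff_braidEquiv_ofFn {g h : Fin k → G} :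
    HurwitzEquiv g h ↔ BraidEquiv rightConj (List.ofFn g) (List.ofFn h) := by
  constructor
  · intro H
    induction H with
    | rel g h H => exact .of_step H.braidStep
    | refl g => exact .refl _
    | symm g h _ ih => exact ih.symm
    | trans g h f _ _ ih ih' => exact ih.trans ih'
  · intro H
    simpa using H.hurwitzEquiv List.length_ofFn

end Tuples

section Labels

variable {G ι : Type*} [Group G] {L M : List G} {c d : List (G × ι)}

/-- Conjugation of labelled elements: each strand keeps its own label. -/
def labelConj (a b : G × ι) : G × ι :=
  (rightConj a.1 b.1, a.2)

theorem BraidStep.exists_labelled (h : BraidStep rightConj L M) :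
    (∀ c : List (G × ι), c.map Prod.fst = L →
      ∃ d, d.map Prod.fst = M ∧ BraidEquiv labelConj c d) ∧
    (∀ d : List (G × ι), d.map Prod.fst = M →
      ∃ c, c.map Prod.fst = L ∧ BraidEquiv labelConj d c) := by
  obtain ⟨l, a, b, r⟩ := h
  refine ⟨fun c hc => ?_, fun d hd => ?_⟩
  · obtain ⟨l, c, rfl, rfl, h⟩ := List.map_eq_append_iff.1 hc
    obtain ⟨a, c, rfl, rfl, h'⟩ := List.map_eq_cons_iff.1 h
    obtain ⟨b, r, rfl, rfl, rfl⟩ := List.map_eq_cons_iff.1 h'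
    exact ⟨l ++ b :: labelConj a b :: r, by simp [labelConj], .of_step (.swap _ _ _ _)⟩
  · obtain ⟨l, d, rfl, rfl, h⟩ := List.map_eq_append_iff.1 hd
    obtain ⟨b, d, rfl, rfl, h'⟩ := List.map_eq_cons_iff.1 h
    obtain ⟨⟨_, i⟩, r, rfl, rfl, rfl⟩ := List.map_eq_cons_iff.1 h'
    exact ⟨l ++ (a, i) :: b :: r, by simp, .symm (.of_step (.swap l (a, i) b r))⟩

theorem BraidEquiv.exists_labelled (h : BraidEquiv rightConj L M) (hc : c.map Prod.fst = L) :
    ∃ d, d.map Prod.fst = M ∧ BraidEquiv labelConj c d := by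
  suffices H : (∀ c : List (G × ι), c.map Prod.fst = L →
      ∃ d, d.map Prod.fst = M ∧ BraidEquiv labelConj c d) ∧
    (∀ d : List (G × ι), d.map Prod.fst = M →
      ∃ c, c.map Prod.fst = L ∧ BraidEquiv labelConj d c) from H.1 c hc
  clear hc
  induction h with
  | rel L M h => exact h.exists_labelled
  | refl L => exact ⟨fun c hc => ⟨c, hc, .refl c⟩, fun c hc => ⟨c, hc, .refl c⟩⟩
  | symm L M _ ih => exact ih.symm
  | trans L M N _ _ ih ih' =>
    refine ⟨fun c hc => ?_, fun c hc => ?_⟩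
    · obtain ⟨d, hd, hcd⟩ := ih.1 c hc
      obtain ⟨e, he, hde⟩ := ih'.1 d hd
      exact ⟨e, he, hcd.trans hde⟩
    · obtain ⟨d, hd, hcd⟩ := ih'.2 c hc
      obtain ⟨e, he, hde⟩ := ih.2 d hd
      exact ⟨e, he, hcd.trans hde⟩

theorem BraidEquiv.labels_perm (h : BraidEquiv labelConj c d) :
    (c.map Prod.snd).Perm (d.map Prod.snd) := by
  refine (h.iff_of_step (P := fun e => (c.map Prod.snd).Perm (e.map Prod.snd)) ?_).1 (.refl _)
  rintro _ _ ⟨l, a, b, r⟩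
  simp only [List.map_append, List.map_cons, labelConj]
  exact ((List.Perm.swap b.2 a.2 (r.map Prod.snd)).append_left (l.map Prod.snd)).congr_right _

theorem BraidEquiv.forall_fst_iff {P : G → Prop} (hP : ∀ a b, P (rightConj a b) ↔ P a)
    (h : BraidEquiv labelConj c d) : (∀ p ∈ c, P p.1) ↔ ∀ p ∈ d, P p.1 := by
  refine h.iff_of_step (P := fun c => ∀ p ∈ c, P p.1) ?_
  rintro _ _ ⟨l, a, b, r⟩
  simp only [List.forall_mem_append, List.forall_mem_cons, labelConj, hP]
  tauto

theorem BraidEquiv.swap_dihedral {t x : G} (ht : t * t = 1) (hx : x * x = 1) (n : ℕ) (i j : ι)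
    (r : List (G × ι)) :
    BraidEquiv labelConj ((t * (t * x) ^ n, i) :: (t * (t * x) ^ (n + 1), j) :: r)
      ((t * (t * x) ^ (n + 1), j) :: (t * (t * x) ^ (n + 2), i) :: r) := by
  have h_inv : (t * x)⁻¹ * t = t * (t * x) := by
    rw [mul_inv_rev, inv_eq_of_mul_eq_one_left ht, inv_eq_of_mul_eq_one_left hx, mul_assoc, ht,
      mul_one, ← mul_assoc, ht, one_mul]
  have h_conj : rightConj (t * (t * x) ^ n) (t * (t * x) ^ (n + 1)) = t * (t * x) ^ (n + 2) :=
    calc rightConj (t * (t * x) ^ n) (t * (t * x) ^ (n + 1))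
        = ((t * x)⁻¹ * t) * (t * x) ^ (n + 1) := by simp only [rightConj]; group
      _ = t * (t * x) ^ (n + 2) := by rw [h_inv, mul_assoc, ← pow_succ']
  simpa only [labelConj, h_conj] using swap (op := labelConj) (t * (t * x) ^ n, i)
    (t * (t * x) ^ (n + 1), j) r

/-- Repeated swaps walk through the reflections `t (t x) ^ n` of the dihedral group `⟨t, x⟩`; an odd
number of steps around an odd polygon restores the values and exchanges the labels. -/
theorem BraidEquiv.swap_labels_of_odd {t x : G} (ht : t * t = 1) (hx : x * x = 1)
    (h : Odd (orderOf (t * x))) (i j : ι) (r : List (G × ι)) :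
    BraidEquiv labelConj ((t, i) :: (x, j) :: r) ((t, j) :: (x, i) :: r) := by
  have h_even (n : ℕ) : BraidEquiv labelConj ((t, i) :: (x, j) :: r)
      ((t * (t * x) ^ (2 * n), i) :: (t * (t * x) ^ (2 * n + 1), j) :: r) := by
    induction n with
    | zero =>
      simpa only [mul_zero, pow_zero, mul_one, zero_add, pow_one, ← mul_assoc, ht, one_mul] using
        refl _
    | succ n ih =>
      exact ih.trans <| (swap_dihedral ht hx _ i j r).trans (swap_dihedral ht hx _ j i r)
  obtain ⟨m, hm⟩ := h
  have h_odd := (h_even m).trans (swap_dihedral ht hx (2 * m) i j r)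
  have h_pow : (t * x) ^ (2 * m + 1) = 1 := hm ▸ pow_orderOf_eq_one (t * x)
  rwa [pow_succ (t * x) (2 * m + 1), h_pow, mul_one, one_mul, ← mul_assoc, ht, one_mul] at h_odd

end Labels

section Separation

variable {G ι : Type*} [Group G] {c d : List (G × ι)} {I : Set ι}

theorem orderOf_mul_swap (a b : G) : orderOf (a * b) = orderOf (b * a) :=
  SemiconjBy.orderOf_eq b (mul_assoc b a b).symm

/-- Two group elements form an even pair if their product does not have odd order. -/
def EvenPair (a b : G) : Prop :=
  ¬Odd (orderOf (a * b))

theorem evenPair_map_iff {H : Type*} [Group H] (φ : G ≃* H) {a b : G} :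
    EvenPair (φ a) (φ b) ↔ EvenPair a b := by
  rw [EvenPair, EvenPair, ← map_mul, MulEquiv.orderOf_eq]

theorem EvenPair.symm {a b : G} (h : EvenPair a b) : EvenPair b a := by
  rwa [EvenPair, orderOf_mul_swap]

theorem EvenPair.ne {a b : G} (h : EvenPair a b) (ha : a * a = 1) :
    a ≠ b := by
  rintro rfl
  exact h (by simp [ha])

/-- The strands labelled in `I` never interact with the others through an element of odd order. -/
def Separated (I : Set ι) (c : List (G × ι)) : Prop :=
  ∀ d, BraidEquiv labelConj c d → ∀ p ∈ d, ∀ q ∈ d, p.2 ∈ I → q.2 ∉ I → EvenPair p.1 q.1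

theorem Separated.of_braidEquiv (hc : Separated I c) (h : BraidEquiv labelConj c d) :
    Separated I d :=
  fun d' h' => hc d' (h.trans h')

theorem Separated.compl (hc : Separated I c) : Separated Iᶜ c := by
  intro d h p hp q hq hpI hqI
  exact (hc d h q hq p hp (Set.notMem_compl_iff.1 hqI) hpI).symm

end Separation

section Cabling

section

variable {G ι : Type*} [DecidableEq ι]

/-- The tuple obtained from `c` by cabling the strands labelled `i` and forgetting all labels. -/
def cable (e : G → List G) (i : ι) (c : List (G × ι)) : List G :=
  c.flatMap fun p => if p.2 = i then e p.1 else [p.1]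

theorem cable_cons_of_notMem {i : ι} (a : G) {r : List (G × ι)} (hi : i ∉ r.map Prod.snd) :
    cable e i ((a, i) :: r) = e a ++ r.map Prod.fst := by
  have h_ne (p : G × ι) (hp : p ∈ r) : p.2 ≠ i := fun h => hi (h ▸ List.mem_map_of_mem hp)
  rw [cable, List.flatMap_cons, if_pos rfl, ← List.flatMap_pure_eq_map,
    List.flatMap_congr fun p hp => if_neg (h_ne p hp)]
  rfl

end

variable {G ι : Type*} [Group G] {e : G → List G} {c d : List (G × ι)}

/-- A rule replacing a strand of a braid by a cable of parallel strands: the cable has the same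
product as the strand, and the rule is equivariant up to braiding within the cable. -/
structure IsCabling (e : G → List G) : Prop where
  prod_eq (a : G) : (e a).prod = a
  map_rightConj (a b : G) : BraidEquiv rightConj ((e a).map (rightConj · b)) (e (rightConj a b))

theorem BraidEquiv.append_comm (x y r : List G) :
    BraidEquiv rightConj (x ++ (y ++ r)) (y ++ (x.map (rightConj · y.prod) ++ r)) := by
  induction y generalizing x with
  | nil =>
    simpa only [rightConj, List.prod_nil, inv_one, one_mul, mul_one, List.map_id', List.nil_append]
      using refl _
  | cons b y ih =>
    have h_map : x.map (rightConj · (b :: y).prod) =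
        (x.map (rightConj · b)).map (rightConj · y.prod) := by
      simp only [List.map_map, Function.comp_def, rightConj, List.prod_cons, mul_inv_rev, mul_assoc]
    rw [h_map]
    exact (pull x b (y ++ r)).trans ((ih (x.map (rightConj · b))).cons b)

variable [DecidableEq ι]

theorem IsCabling.cable_braidEquiv (he : IsCabling e) (i : ι) (h : BraidEquiv labelConj c d) :
    BraidEquiv rightConj (cable e i c) (cable e i d) := by
  refine h.lift _ ?_
  rintro _ _ ⟨l, ⟨a, j⟩, ⟨b, k⟩, r⟩
  simp only [cable, List.flatMap_append, List.flatMap_cons]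
  refine .append_left _ ((BraidEquiv.append_comm _ _ _).trans (.append_left _ ?_))
  have h_prod : (if k = i then e b else [b]).prod = b := by
    split_ifs
    exacts [he.prod_eq b, List.prod_singleton]
  rw [h_prod, labelConj]
  refine .append_right ?_ _
  split_ifs
  exacts [he.map_rightConj a b, .refl _]

/-- Two labels are linked if cabling either of the two strands gives braid equivalent tuples. -/
def Linked (e : G → List G) (c : List (G × ι)) (i j : ι) : Prop :=
  BraidEquiv rightConj (cable e i c) (cable e j c)

theorem IsCabling.linked_iff (he : IsCabling e) (h : BraidEquiv labelConj c d) {i j : ι} :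
    Linked e c i j ↔ Linked e d i j :=
  ⟨fun H => ((he.cable_braidEquiv i h).symm.trans H).trans (he.cable_braidEquiv j h),
    fun H => ((he.cable_braidEquiv i h).trans H).trans (he.cable_braidEquiv j h).symm⟩

theorem IsCabling.linked_of_odd_cons (he : IsCabling e) {a b : G} (ha : a * a = 1) (hb : b * b = 1)
    {i j : ι} {r : List (G × ι)} (hc : (((a, i) :: (b, j) :: r).map Prod.snd).Nodup)
    (h : Odd (orderOf (a * b))) : Linked e ((a, i) :: (b, j) :: r) i j := by
  simp only [List.map_cons, List.nodup_cons, List.mem_cons, not_or] at hc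
  obtain ⟨⟨hij, hi⟩, hj, -⟩ := hc
  have h_cable : cable e i ((a, i) :: (b, j) :: r) = cable e j ((a, j) :: (b, i) :: r) := by
    rw [cable_cons_of_notMem, cable_cons_of_notMem] <;>
      simp [hij, Ne.symm hij, hi, hj]
  rw [Linked, h_cable]
  exact (he.cable_braidEquiv j (.swap_labels_of_odd ha hb h i j r)).symm

theorem IsCabling.linked_of_odd (he : IsCabling e) (h_inv : ∀ p ∈ c, p.1 * p.1 = 1)
    (hc : (c.map Prod.snd).Nodup) {p q : G × ι} (hp : p ∈ c) (hq : q ∈ c) (hpq : p.2 ≠ q.2)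
    (h : Odd (orderOf (p.1 * q.1))) : Linked e c p.2 q.2 := by
  have hp_inv := h_inv p hp
  have hq_inv := h_inv q hq
  obtain ⟨r, hr | hr⟩ := BraidEquiv.exists_pull_pair (op := labelConj) hp hq (ne_of_apply_ne _ hpq)
  · exact (he.linked_iff hr).2
      (he.linked_of_odd_cons hp_inv hq_inv (hr.labels_perm.nodup_iff.1 hc) h)
  · rw [orderOf_mul_swap] at h
    exact (he.linked_iff hr).2
      (he.linked_of_odd_cons hq_inv hp_inv (hr.labels_perm.nodup_iff.1 hc) h).symm

theorem IsCabling.separated_setOf_linked (he : IsCabling e) (h_inv : ∀ p ∈ c, p.1 * p.1 = 1)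
    (hc : (c.map Prod.snd).Nodup) (i : ι) : Separated {j | Linked e c i j} c := by
  intro d hd p hp q hq hpi hqi h_odd
  have h_inv' : ∀ p ∈ d, p.1 * p.1 = 1 :=
    (hd.forall_fst_iff (P := fun a => a * a = 1) fun a b => by
      rw [rightConj_eq_mulAut_conj, ← map_mul, EmbeddingLike.map_eq_one_iff]).1 h_inv
  have hpq : p.2 ≠ q.2 := fun h => hqi (h ▸ hpi)
  have h_linked := he.linked_of_odd h_inv' (hd.labels_perm.nodup_iff.1 hc) hp hq hpq h_odd
  exact hqi (BraidEquiv.trans hpi ((he.linked_iff hd).2 h_linked))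

end Cabling

section DoubleTranspositions

open Equiv Equiv.Perm

/-- The elements of order two of `A₆`, that is, the products of two disjoint transpositions. -/
structure IsDoubleTransposition (p : Perm (Fin 6)) : Prop where
  sign_eq : sign p = 1
  orderOf_eq : orderOf p = 2

/-- The double transposition `(0 1)(2 3)`, used as a representative of the conjugacy class. -/
def baseDT : Perm (Fin 6) :=
  swap 0 1 * swap 2 3

/-- The 45 double transpositions, listed for finite verifications. These are phrased with
`List.Forall`, since `∀ p ∈ l` would be decided by running through all 720 permutations. -/
def doubleTranspositions : List (Perm (Fin 6)) :=
  ((List.finRange 6).sublistsLen 4).flatMap fun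
    | [i, j, k, l] => [swap i j * swap k l, swap i k * swap j l, swap i l * swap j k]
    | _ => []

namespace IsDoubleTransposition

variable {p q : Perm (Fin 6)}

theorem mul_self (hp : IsDoubleTransposition p) : p * p = 1 := by
  rw [← pow_two, ← hp.orderOf_eq, pow_orderOf_eq_one]

theorem ne_one (hp : IsDoubleTransposition p) : p ≠ 1 := by
  rintro rfl
  simpa using hp.orderOf_eq

theorem of_mul_self (hs : sign p = 1) (h1 : p ≠ 1) (hp : p * p = 1) : IsDoubleTransposition p :=
  ⟨hs, orderOf_eq_prime (by rw [pow_two, hp]) h1⟩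

set_option maxRecDepth 100000 in
theorem mem_list (hp : IsDoubleTransposition p) : p ∈ doubleTranspositions := by
  have key : ∀ p : Perm (Fin 6), p * p = 1 → p ≠ 1 → sign p = 1 → p ∈ doubleTranspositions := by
    decide +kernel
  exact key p hp.mul_self hp.ne_one hp.sign_eq

theorem conj_iff (g : Perm (Fin 6)) :
    IsDoubleTransposition (MulAut.conj g p) ↔ IsDoubleTransposition p := by
  have h_sign : sign (MulAut.conj g p) = sign p := by
    simp only [MulAut.conj_apply, map_mul, map_inv, mul_inv_cancel_comm]
  have h_order := MulEquiv.orderOf_eq (MulAut.conj g) p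
  exact ⟨fun h => ⟨h_sign.symm.trans h.1, h_order.symm.trans h.2⟩,
    fun h => ⟨h_sign.trans h.1, h_order.trans h.2⟩⟩

theorem cycleType_eq (hp : IsDoubleTransposition p) : p.cycleType = {2, 2} := by
  obtain ⟨n, hn⟩ := cycleType_prime_order (hp.orderOf_eq ▸ Nat.prime_two)
  rw [hp.orderOf_eq] at hn
  have h_sum := sum_cycleType_le p
  have h_sign := hp.sign_eq
  rw [sign_of_cycleType, hn] at h_sign
  rw [hn, Multiset.sum_replicate, Fintype.card_fin, smul_eq_mul] at h_sum
  have h_lt : n < 3 := by lia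
  interval_cases n
  · exact absurd h_sign (by decide)
  · exact hn
  · exact absurd h_sign (by decide)

theorem exists_conj_eq (hp : IsDoubleTransposition p) (hq : IsDoubleTransposition q) :
    ∃ g, MulAut.conj g p = q :=
  isConj_iff.1 (isConj_iff_cycleType_eq.2 (hp.cycleType_eq.trans hq.cycleType_eq.symm))

end IsDoubleTransposition

theorem isDoubleTransposition_baseDT : IsDoubleTransposition baseDT :=
  .of_mul_self (by decide) (by decide) (by decide)

theorem fixedPts_conj_eq_iff {n : ℕ} (g : Perm (Fin n)) {u v : Perm (Fin n)} :
    FixedPts (MulAut.conj g u) = FixedPts (MulAut.conj g v) ↔ FixedPts u = FixedPts v := by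
  have h_image (p : Perm (Fin n)) : FixedPts (MulAut.conj g p) = g '' FixedPts p := by
    ext x
    simp [FixedPts, g.image_eq_preimage_symm, eq_comm, Equiv.symm_apply_eq]
  rw [h_image, h_image, g.injective.image_injective.eq_iff]

theorem fixedPts_eq_iff {n : ℕ} {u v : Perm (Fin n)} :
    FixedPts u = FixedPts v ↔ ∀ i, u i = i ↔ v i = i :=
  Set.ext_iff

section

variable {a b c d r v x : Perm (Fin 6)}

set_option maxRecDepth 100000 in
theorem IsDoubleTransposition.mul_pow_four_eq_one (ha : IsDoubleTransposition a)
    (hb : IsDoubleTransposition b) (h : EvenPair a b) : (a * b) ^ 4 = 1 := by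
  have key : doubleTranspositions.Forall fun b =>
      (baseDT * b) ^ 4 = 1 ∨ (baseDT * b) ^ 3 = 1 ∨ (baseDT * b) ^ 5 = 1 := by
    decide +kernel
  obtain ⟨g, hg⟩ := ha.exists_conj_eq isDoubleTransposition_baseDT
  have h_key := List.forall_iff_forall_mem.1 key _
    ((IsDoubleTransposition.conj_iff g).2 hb).mem_list
  simp only [← hg, ← map_mul, ← map_pow, EmbeddingLike.map_eq_one_iff] at h_key
  refine h_key.resolve_right fun h_odd => h ?_
  rcases h_odd with h_odd | h_odd <;>
    exact Odd.of_dvd_nat (by decide) (orderOf_dvd_of_pow_eq_one h_odd)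

/-- The double transpositions with the same fixed points as `r`; for a double transposition `r`
these are the involutions of a Klein four-group. -/
def kleinClass (r : Perm (Fin 6)) : Set (Perm (Fin 6)) :=
  {v | IsDoubleTransposition v ∧ FixedPts v = FixedPts r}

theorem conj_mem_kleinClass_iff (g : Perm (Fin 6)) :
    MulAut.conj g v ∈ kleinClass (MulAut.conj g r) ↔ v ∈ kleinClass r :=
  and_congr (IsDoubleTransposition.conj_iff g) (fixedPts_conj_eq_iff g)

theorem conj_mem_centralizer_kleinClass_iff (g : Perm (Fin 6)) :
    MulAut.conj g x ∈ Subgroup.centralizer (kleinClass (MulAut.conj g r)) ↔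
      x ∈ Subgroup.centralizer (kleinClass r) := by
  rw [Subgroup.mem_centralizer_iff, Subgroup.mem_centralizer_iff,
    (MulAut.conj g).surjective.forall]
  refine forall_congr' fun v => imp_congr (conj_mem_kleinClass_iff g) ?_
  rw [← map_mul, ← map_mul, (MulAut.conj g).injective.eq_iff]

/-- The list underlying `kleinClass r`, for finite verifications. -/
def kleinList (r : Perm (Fin 6)) : List (Perm (Fin 6)) :=
  doubleTranspositions.filter fun v => ∀ i, v i = i ↔ r i = i

theorem mem_kleinList (hv : v ∈ kleinClass r) : v ∈ kleinList r :=
  List.mem_filter.2 ⟨hv.1.mem_list, decide_eq_true (fixedPts_eq_iff.1 hv.2)⟩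

set_option maxRecDepth 100000 in
theorem kleinClass_structure (hr : IsDoubleTransposition r) (hv : v ∈ kleinClass r)
    (hvr : v ≠ r) :
    Commute r v ∧ FixedPts (r * v) = FixedPts r ∧
      ∀ w ∈ kleinClass r, w = r ∨ w = v ∨ w = r * v := by
  have key : (kleinList baseDT).Forall fun v => v ≠ baseDT → baseDT * v = v * baseDT ∧
      (∀ i, (baseDT * v) i = i ↔ baseDT i = i) ∧
      (kleinList baseDT).Forall fun w => w = baseDT ∨ w = v ∨ w = baseDT * v := by
    decide +kernel
  obtain ⟨g, hg⟩ := hr.exists_conj_eq isDoubleTransposition_baseDT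
  have h_mem {w : Perm (Fin 6)} (hw : w ∈ kleinClass r) :
      MulAut.conj g w ∈ kleinList baseDT :=
    mem_kleinList (hg ▸ (conj_mem_kleinClass_iff g).2 hw)
  have h_inj := (MulAut.conj g).injective
  obtain ⟨h_comm, h_fix, h_all⟩ :=
    List.forall_iff_forall_mem.1 key _ (h_mem hv) (hg ▸ h_inj.ne hvr)
  rw [List.forall_iff_forall_mem] at h_all
  simp only [← hg, ← map_mul] at h_comm h_fix h_all
  refine ⟨h_inj h_comm, (fixedPts_conj_eq_iff g).1 (fixedPts_eq_iff.2 h_fix), fun w hw => ?_⟩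
  exact (h_all _ (hg ▸ h_mem hw)).imp (@h_inj _ _) (.imp (@h_inj _ _) (@h_inj _ _))

/-- The values that strands on the side of `b` can take in a separated tuple starting with `a`, `b`,
where `a` is on the other side: before and after a swap they form even pairs with the first strand
on that side. -/
def companions (a b : Perm (Fin 6)) : Set (Perm (Fin 6)) :=
  {c | IsDoubleTransposition c ∧ EvenPair a c ∧ EvenPair (rightConj a b) c}

theorem conj_mem_companions_iff (g : Perm (Fin 6)) :
    MulAut.conj g c ∈ companions (MulAut.conj g a) (MulAut.conj g b) ↔ c ∈ companions a b := by
  have h_conj : rightConj (MulAut.conj g a) (MulAut.conj g b) = MulAut.conj g (rightConj a b) := by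
    simp only [rightConj, map_mul, map_inv]
  refine and_congr (IsDoubleTransposition.conj_iff g) (and_congr (evenPair_map_iff _) ?_)
  rw [h_conj, evenPair_map_iff]

/-- A list containing `companions a b`, for finite verifications. -/
def companionList (a b : Perm (Fin 6)) : List (Perm (Fin 6)) :=
  doubleTranspositions.filter fun c =>
    a ≠ c ∧ (a * c) ^ 4 = 1 ∧ rightConj a b ≠ c ∧ (rightConj a b * c) ^ 4 = 1

theorem mem_companionList (ha : IsDoubleTransposition a) (hc : c ∈ companions a b) :
    c ∈ companionList a b := by
  obtain ⟨hc, h_even, h_even'⟩ := hc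
  have h_conj : IsDoubleTransposition (rightConj a b) := by
    rwa [rightConj_eq_mulAut_conj, IsDoubleTransposition.conj_iff]
  exact List.mem_filter.2 ⟨hc.mem_list, decide_eq_true ⟨h_even.ne ha.mul_self,
    ha.mul_pow_four_eq_one hc h_even,
    h_even'.ne h_conj.mul_self, h_conj.mul_pow_four_eq_one hc h_even'⟩⟩

/-- There are nontrivial elements `x` and `y`, centralizing `companions a b` and `companions b a`
respectively, such that across any even pair of companions one of them even centralizes the Klein
class on the other side. -/
def HasCentralizingPair (a b : Perm (Fin 6)) : Prop :=
  ∃ x y, x ≠ 1 ∧ y ≠ 1 ∧ (∀ c ∈ companions a b, Commute x c) ∧ (∀ c ∈ companions b a, Commute y c) ∧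
    ∀ c ∈ companions a b, ∀ d ∈ companions b a, EvenPair c d →
      x ∈ Subgroup.centralizer (kleinClass d) ∨ y ∈ Subgroup.centralizer (kleinClass c)

theorem HasCentralizingPair.symm (h : HasCentralizingPair a b) : HasCentralizingPair b a := by
  obtain ⟨x, y, hx, hy, hxc, hyc, h⟩ := h
  exact ⟨y, x, hy, hx, hyc, hxc, fun c hc d hd hcd => (h d hd c hc hcd.symm).symm⟩

theorem HasCentralizingPair.of_conj (g : Perm (Fin 6))
    (h : HasCentralizingPair (MulAut.conj g a) (MulAut.conj g b)) : HasCentralizingPair a b := by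
  obtain ⟨x, y, hx, hy, hxc, hyc, h⟩ := h
  obtain ⟨x, rfl⟩ := (MulAut.conj g).surjective x
  obtain ⟨y, rfl⟩ := (MulAut.conj g).surjective y
  rw [MulEquiv.map_ne_one_iff] at hx hy
  refine ⟨x, y, hx, hy,
    fun c hc => (hxc _ ((conj_mem_companions_iff g).2 hc)).of_map (MulAut.conj g).injective,
    fun c hc => (hyc _ ((conj_mem_companions_iff g).2 hc)).of_map (MulAut.conj g).injective,
    fun c hc d hd hcd => ?_⟩
  simpa only [conj_mem_centralizer_kleinClass_iff] using h _ ((conj_mem_companions_iff g).2 hc) _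
    ((conj_mem_companions_iff g).2 hd) ((evenPair_map_iff _).2 hcd)

theorem mem_centralizer_kleinClass_of_kleinList (h : (kleinList r).Forall fun v => v * x = x * v) :
    x ∈ Subgroup.centralizer (kleinClass r) :=
  Subgroup.mem_centralizer_iff.2 fun v hv =>
    List.forall_iff_forall_mem.1 h v (mem_kleinList hv)

/-- A double transposition forming with `baseDT` an even pair that does not commute. -/
def partnerDT : Perm (Fin 6) :=
  swap 0 2 * swap 4 5

theorem isDoubleTransposition_partnerDT : IsDoubleTransposition partnerDT :=
  .of_mul_self (by decide) (by decide) (by decide)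

/-- The elements of `companions baseDT partnerDT`. -/
def baseCompanions : List (Perm (Fin 6)) :=
  swap 0 2 * swap 1 3 :: [(0, 1), (0, 2), (0, 3), (1, 2), (1, 3), (2, 3)].map fun p =>
    swap p.1 p.2 * swap 4 5

/-- The elements of `companions partnerDT baseDT`. -/
def partnerCompanions : List (Perm (Fin 6)) :=
  [swap 0 1 * swap 2 3, swap 0 2 * swap 1 3, swap 0 3 * swap 1 2, swap 0 4 * swap 2 5,
    swap 0 5 * swap 2 4, swap 1 4 * swap 3 5, swap 1 5 * swap 3 4]

set_option maxRecDepth 100000 in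
theorem mem_baseCompanions (hc : c ∈ companions baseDT partnerDT) : c ∈ baseCompanions := by
  have key : (companionList baseDT partnerDT).Forall (· ∈ baseCompanions) := by
    decide +kernel
  exact List.forall_iff_forall_mem.1 key c (mem_companionList isDoubleTransposition_baseDT hc)

set_option maxRecDepth 100000 in
theorem mem_partnerCompanions (hc : c ∈ companions partnerDT baseDT) : c ∈ partnerCompanions := by
  have key : (companionList partnerDT baseDT).Forall (· ∈ partnerCompanions) := by
    decide +kernel
  exact List.forall_iff_forall_mem.1 key c (mem_companionList isDoubleTransposition_partnerDT hc)

set_option maxRecDepth 100000 in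
theorem hasCentralizingPair_baseDT_partnerDT : HasCentralizingPair baseDT partnerDT := by
  have hx : baseCompanions.Forall fun c => swap 4 5 * c = c * swap 4 5 := by
    decide +kernel
  have hy : partnerCompanions.Forall fun c =>
      swap 0 2 * swap 1 3 * swap 4 5 * c = c * (swap 0 2 * swap 1 3 * swap 4 5) := by
    decide +kernel
  have hxy : baseCompanions.Forall fun c => partnerCompanions.Forall fun d =>
      c ≠ d → (c * d) ^ 4 = 1 →
        ((kleinList d).Forall fun v => v * swap 4 5 = swap 4 5 * v) ∨
          (kleinList c).Forall fun v =>
            v * (swap 0 2 * swap 1 3 * swap 4 5) = swap 0 2 * swap 1 3 * swap 4 5 * v := by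
    decide +kernel
  simp only [List.forall_iff_forall_mem (l := baseCompanions),
    List.forall_iff_forall_mem (l := partnerCompanions)] at hx hy hxy
  refine ⟨swap 4 5, swap 0 2 * swap 1 3 * swap 4 5, by decide, by decide,
    fun c hc => hx c (mem_baseCompanions hc), fun c hc => hy c (mem_partnerCompanions hc),
    fun c hc d hd hcd => ?_⟩
  exact (hxy c (mem_baseCompanions hc) d (mem_partnerCompanions hd) (hcd.ne hc.1.mul_self)
    (hc.1.mul_pow_four_eq_one hd.1 hcd)).imp
    mem_centralizer_kleinClass_of_kleinList mem_centralizer_kleinClass_of_kleinList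

set_option maxRecDepth 100000 in
theorem hasCentralizingPair_baseDT (hb : IsDoubleTransposition b) (h_even : EvenPair baseDT b)
    (h_comm : ¬Commute baseDT b) : HasCentralizingPair baseDT b := by
  -- The four-cycle centralizes `baseDT`, and the six-cycle maps `baseDT` to `partnerDT`.
  have key : doubleTranspositions.Forall fun b => baseDT ≠ b → (baseDT * b) ^ 4 = 1 →
      baseDT * b ≠ b * baseDT → ∃ n : Fin 4,
        (MulAut.conj (c[0, 2, 1, 3] ^ (n : ℕ)) baseDT = baseDT ∧
          MulAut.conj (c[0, 2, 1, 3] ^ (n : ℕ)) b = partnerDT) ∨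
        (MulAut.conj (c[0, 4, 1, 5, 3, 2] * c[0, 2, 1, 3] ^ (n : ℕ)) baseDT = partnerDT ∧
          MulAut.conj (c[0, 4, 1, 5, 3, 2] * c[0, 2, 1, 3] ^ (n : ℕ)) b = baseDT) := by
    decide +kernel
  obtain ⟨n, ⟨h₁, h₂⟩ | ⟨h₁, h₂⟩⟩ := List.forall_iff_forall_mem.1 key b hb.mem_list
    (h_even.ne isDoubleTransposition_baseDT.mul_self)
    (isDoubleTransposition_baseDT.mul_pow_four_eq_one hb h_even) h_comm
  · refine .of_conj (c[0, 2, 1, 3] ^ (n : ℕ)) ?_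
    rw [h₁, h₂]
    exact hasCentralizingPair_baseDT_partnerDT
  · refine .of_conj (c[0, 4, 1, 5, 3, 2] * c[0, 2, 1, 3] ^ (n : ℕ)) ?_
    rw [h₁, h₂]
    exact hasCentralizingPair_baseDT_partnerDT.symm

theorem hasCentralizingPair_of_not_commute (ha : IsDoubleTransposition a)
    (hb : IsDoubleTransposition b) (h_even : EvenPair a b) (h_comm : ¬Commute a b) :
    HasCentralizingPair a b := by
  obtain ⟨g, hg⟩ := ha.exists_conj_eq isDoubleTransposition_baseDT
  refine .of_conj g
    (hg ▸ hasCentralizingPair_baseDT ((IsDoubleTransposition.conj_iff g).2 hb) ?_ ?_)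
  · rwa [← hg, evenPair_map_iff]
  · exact fun h => h_comm ((hg.symm ▸ h).of_map (MulAut.conj g).injective)

set_option maxRecDepth 100000 in
theorem eq_of_commute (ha : IsDoubleTransposition a) (hb : IsDoubleTransposition b)
    (hc : IsDoubleTransposition c) (hd : IsDoubleTransposition d) (hac : Commute a c)
    (hbc : Commute b c) (had : Commute a d) (hbd : Commute b d) (hab : a ≠ b) (hac_ne : a ≠ c)
    (hbc_ne : b ≠ c) (had_ne : a ≠ d) (hbd_ne : b ≠ d) : c = d := by
  have key : doubleTranspositions.Forall fun b => baseDT ≠ b → doubleTranspositions.Forall fun c =>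
      baseDT ≠ c → b ≠ c → baseDT * c = c * baseDT → b * c = c * b →
        doubleTranspositions.Forall fun d => baseDT ≠ d → b ≠ d →
          baseDT * d = d * baseDT → b * d = d * b → c = d := by
    decide +kernel
  obtain ⟨g, hg⟩ := ha.exists_conj_eq isDoubleTransposition_baseDT
  have h_inj := (MulAut.conj g).injective
  have h_mem {p : Perm (Fin 6)} (hp : IsDoubleTransposition p) :
      MulAut.conj g p ∈ doubleTranspositions :=
    ((IsDoubleTransposition.conj_iff g).2 hp).mem_list
  simp only [← hg, List.forall_iff_forall_mem] at key
  exact h_inj <| key _ (h_mem hb) (h_inj.ne hab) _ (h_mem hc) (h_inj.ne hac_ne) (h_inj.ne hbc_ne)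
    (hac.map _) (hbc.map _) _ (h_mem hd) (h_inj.ne had_ne) (h_inj.ne hbd_ne) (had.map _)
    (hbd.map _)

end

/-- The condition for a tuple starting with `u`, `v` to admit a 1-reduction in its first two
entries. -/
structure IsReduciblePair (u v : Perm (Fin 6)) : Prop where
  left : IsDoubleTransposition u
  right : IsDoubleTransposition v
  ne : u ≠ v
  fixedPts_eq : FixedPts u = FixedPts v

namespace IsReduciblePair

variable {u v u' v' : Perm (Fin 6)}

theorem mem_kleinClass (h : IsReduciblePair u v) : v ∈ kleinClass u :=
  ⟨h.right, h.fixedPts_eq.symm⟩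

theorem commute (h : IsReduciblePair u v) : Commute u v :=
  (kleinClass_structure h.left h.mem_kleinClass h.ne.symm).1

theorem fixedPts_mul (h : IsReduciblePair u v) : FixedPts (u * v) = FixedPts u :=
  (kleinClass_structure h.left h.mem_kleinClass h.ne.symm).2.1

theorem isDoubleTransposition_mul (h : IsReduciblePair u v) : IsDoubleTransposition (u * v) := by
  refine .of_mul_self ?_ (fun h_one => h.ne ?_) ?_
  · rw [map_mul, h.left.sign_eq, h.right.sign_eq, one_mul]
  · rw [← mul_right_cancel_iff (a := v), h_one, h.right.mul_self]
  · rw [h.commute.symm.mul_mul_mul_comm, h.left.mul_self, h.right.mul_self, one_mul]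

theorem conj_iff (g : Perm (Fin 6)) :
    IsReduciblePair (MulAut.conj g u) (MulAut.conj g v) ↔ IsReduciblePair u v := by
  have h_left := IsDoubleTransposition.conj_iff (p := u) g
  have h_right := IsDoubleTransposition.conj_iff (p := v) g
  have h_ne := (MulAut.conj g).injective.ne_iff (x := u) (y := v)
  have h_fix := fixedPts_conj_eq_iff g (u := u) (v := v)
  exact ⟨fun h => ⟨h_left.1 h.1, h_right.1 h.2, h_ne.1 h.3, h_fix.1 h.4⟩,
    fun h => ⟨h_left.2 h.1, h_right.2 h.2, h_ne.2 h.3, h_fix.2 h.4⟩⟩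

theorem braidEquiv_of_mul_eq (h : IsReduciblePair u v) (h' : IsReduciblePair u' v')
    (h_mul : u * v = u' * v') : BraidEquiv rightConj [u, v] [u', v'] := by
  have h_mem : u' ∈ kleinClass u := ⟨h'.left, by rw [← h'.fixedPts_mul, ← h_mul, h.fixedPts_mul]⟩
  rcases (kleinClass_structure h.left h.mem_kleinClass h.ne.symm).2.2 u' h_mem with
    rfl | rfl | rfl
  · rw [mul_left_cancel h_mul]
    exact .refl _
  · have h_conj : rightConj u u' = u := by
      rw [rightConj, mul_assoc, h.commute.eq, inv_mul_cancel_left]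
    rw [h.commute.eq, mul_right_inj] at h_mul
    rw [← h_mul]
    simpa only [h_conj] using BraidEquiv.swap (op := rightConj) u u' []
  · exact absurd (left_eq_mul.1 h_mul) h'.right.ne_one

end IsReduciblePair

open Classical in
/-- The cabling inverse to 1-reduction: a reducible pair with product `a`, if there is one. -/
noncomputable def kleinSplit (a : Perm (Fin 6)) : List (Perm (Fin 6)) :=
  if h : ∃ p : Perm (Fin 6) × Perm (Fin 6), IsReduciblePair p.1 p.2 ∧ a = p.1 * p.2 then
    [h.choose.1, h.choose.2]
  else [a]

theorem kleinSplit_eq (a : Perm (Fin 6)) :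
    (∃ u v, IsReduciblePair u v ∧ a = u * v ∧ kleinSplit a = [u, v]) ∨
      kleinSplit a = [a] ∧ ∀ u v, IsReduciblePair u v → a ≠ u * v := by
  rw [kleinSplit]
  split_ifs with h
  · exact .inl ⟨_, _, h.choose_spec.1, h.choose_spec.2, rfl⟩
  · exact .inr ⟨rfl, fun u v huv ha => h ⟨(u, v), huv, ha⟩⟩

theorem IsReduciblePair.braidEquiv_kleinSplit {u v : Perm (Fin 6)} (h : IsReduciblePair u v) :
    BraidEquiv rightConj [u, v] (kleinSplit (u * v)) := by
  obtain ⟨u', v', h', h_mul, h_split⟩ | ⟨-, h_none⟩ := kleinSplit_eq (u * v)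
  · rw [h_split]
    exact h.braidEquiv_of_mul_eq h' h_mul
  · exact absurd rfl (h_none u v h)

theorem isCabling_kleinSplit : IsCabling kleinSplit where
  prod_eq a := by
    obtain ⟨u, v, -, rfl, h_split⟩ | ⟨h_split, -⟩ := kleinSplit_eq a
    · rw [h_split, List.prod_pair]
    · rw [h_split, List.prod_singleton]
  map_rightConj a b := by
    simp only [rightConj_eq_mulAut_conj]
    obtain ⟨u, v, h, rfl, h_split⟩ | ⟨h_split, h_none⟩ := kleinSplit_eq a
    · rw [h_split, map_mul]
      exact ((IsReduciblePair.conj_iff b⁻¹).2 h).braidEquiv_kleinSplit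
    · obtain ⟨u, v, h, h_mul, -⟩ | ⟨h_split', -⟩ := kleinSplit_eq (MulAut.conj b⁻¹ a)
      · obtain ⟨u, rfl⟩ := (MulAut.conj b⁻¹).surjective u
        obtain ⟨v, rfl⟩ := (MulAut.conj b⁻¹).surjective v
        rw [← map_mul] at h_mul
        exact absurd ((MulAut.conj b⁻¹).injective h_mul)
          (h_none u v ((IsReduciblePair.conj_iff b⁻¹).1 h))
      · rw [h_split, h_split']
        exact .refl _

theorem mem_kleinClass_of_mem_kleinSplit {a w : Perm (Fin 6)} (ha : IsDoubleTransposition a)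
    (hw : w ∈ kleinSplit a) : w ∈ kleinClass a := by
  obtain ⟨u, v, h, rfl, h_split⟩ | ⟨h_split, -⟩ := kleinSplit_eq a
  · rw [h_split, List.mem_pair] at hw
    rcases hw with rfl | rfl
    · exact ⟨h.left, h.fixedPts_mul.symm⟩
    · exact ⟨h.right, h.fixedPts_eq.symm.trans h.fixedPts_mul.symm⟩
  · rw [h_split, List.mem_singleton] at hw
    rw [hw]
    exact ⟨ha, rfl⟩

end DoubleTranspositions

section Linking

open Equiv Equiv.Perm

variable {ι : Type*} {c d r : List (Perm (Fin 6) × ι)} {I : Set ι}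

/-- Some nontrivial element centralizes all strands of `c`, and the whole Klein class of each strand
labelled in `I`; it then also centralizes every cable of a strand labelled in `I`. -/
def HasCableCentralizer (I : Set ι) (c : List (Perm (Fin 6) × ι)) : Prop :=
  ∃ x ≠ 1, ∀ p ∈ c,
    Commute x p.1 ∧ (p.2 ∈ I → x ∈ Subgroup.centralizer (kleinClass p.1))

theorem HasCableCentralizer.of_forall (h_dt : ∀ p ∈ c, IsDoubleTransposition p.1)
    {x : Perm (Fin 6)} (hx : x ≠ 1)
    (h_mem : ∀ p ∈ c, p.2 ∈ I → x ∈ Subgroup.centralizer (kleinClass p.1))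
    (h_notMem : ∀ p ∈ c, p.2 ∉ I → Commute x p.1) : HasCableCentralizer I c := by
  refine ⟨x, hx, fun p hp => ⟨?_, h_mem p hp⟩⟩
  by_cases hpI : p.2 ∈ I
  · exact (Subgroup.mem_centralizer_iff.1 (h_mem p hp hpI) p.1 ⟨h_dt p hp, rfl⟩).symm
  · exact h_notMem p hp hpI

theorem HasCableCentralizer.centralizer_cable_ne_bot [DecidableEq ι]
    (h : HasCableCentralizer I c) (h_dt : ∀ p ∈ c, IsDoubleTransposition p.1) {i : ι}
    (hi : i ∈ I) : Subgroup.centralizer {a | a ∈ cable kleinSplit i c} ≠ ⊥ := by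
  obtain ⟨x, hx, h_comm⟩ := h
  refine fun h_bot => hx ((Subgroup.eq_bot_iff_forall _).1 h_bot x ?_)
  rw [Subgroup.mem_centralizer_iff]
  intro a ha
  obtain ⟨p, hp, ha⟩ := List.mem_flatMap.1 ha
  split_ifs at ha with hpi
  · exact Subgroup.mem_centralizer_iff.1 ((h_comm p hp).2 (hpi ▸ hi)) a
      (mem_kleinClass_of_mem_kleinSplit (h_dt p hp) ha)
  · rw [List.mem_singleton.1 ha]
    exact (h_comm p hp).1.symm

theorem mem_companions_of_separated {a b : Perm (Fin 6)} {i j : ι}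
    (h : Separated I ((a, i) :: (b, j) :: r))
    (h_dt : ∀ p ∈ (a, i) :: (b, j) :: r, IsDoubleTransposition p.1) (hi : i ∈ I)
    {p : Perm (Fin 6) × ι} (hp : p ∈ (a, i) :: (b, j) :: r) (hpI : p.2 ∉ I) :
    p.1 ∈ companions a b := by
  have h_ne : p ≠ (a, i) := fun h_eq => hpI (h_eq ▸ hi)
  have hp' : p ∈ (b, j) :: (rightConj a b, i) :: r := by
    simp only [List.mem_cons, h_ne, false_or] at hp ⊢
    exact hp.imp_right .inr
  exact ⟨h_dt p hp, h _ (.refl _) (a, i) List.mem_cons_self p hp hi hpI,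
    h _ (.swap (a, i) (b, j) r) (rightConj a b, i) (by simp [labelConj]) p hp' hi hpI⟩

theorem mem_companions_symm_of_separated {a b : Perm (Fin 6)} {i j : ι}
    (h : Separated I ((a, i) :: (b, j) :: r))
    (h_dt : ∀ p ∈ (a, i) :: (b, j) :: r, IsDoubleTransposition p.1) (hj : j ∉ I)
    {p : Perm (Fin 6) × ι} (hp : p ∈ (a, i) :: (b, j) :: r) (hpI : p.2 ∈ I) :
    p.1 ∈ companions b a := by
  have h_ne : p ≠ (b, j) := fun h_eq => hj (by rwa [h_eq] at hpI)
  have hp' : p ∈ (rightConj b a, j) :: (a, i) :: r := by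
    simp only [List.mem_cons, h_ne, false_or] at hp ⊢
    exact .inr hp
  have h_conj : rightConj (rightConj b a) a = b := by
    have ha := (h_dt (a, i) List.mem_cons_self).mul_self
    simp only [rightConj, inv_eq_of_mul_eq_one_left ha, mul_assoc, ha, mul_one]
    rw [← mul_assoc, ha, one_mul]
  have h_braid : BraidEquiv labelConj ((rightConj b a, j) :: (a, i) :: r)
      ((a, i) :: (b, j) :: r) := by
    simpa only [labelConj, h_conj] using
      BraidEquiv.swap (op := labelConj) (rightConj b a, j) (a, i) r
  exact ⟨h_dt p hp, (h _ (.refl _) p hp (b, j) (by simp) hpI hj).symm,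
    (h _ h_braid.symm p hp' (rightConj b a, j) List.mem_cons_self hpI hj).symm⟩

theorem hasCableCentralizer_of_not_commute {a b : Perm (Fin 6)} {i j : ι}
    (h : Separated I ((a, i) :: (b, j) :: r))
    (h_dt : ∀ p ∈ (a, i) :: (b, j) :: r, IsDoubleTransposition p.1) (hi : i ∈ I) (hj : j ∉ I)
    (h_comm : ¬Commute a b) :
    HasCableCentralizer I ((a, i) :: (b, j) :: r) ∨
      HasCableCentralizer Iᶜ ((a, i) :: (b, j) :: r) := by
  have h_left {p : Perm (Fin 6) × ι} := mem_companions_of_separated h h_dt hi (p := p)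
  have h_right {p : Perm (Fin 6) × ι} := mem_companions_symm_of_separated h h_dt hj (p := p)
  have h_even : EvenPair a b := h _ (.refl _) (a, i) (by simp) (b, j) (by simp) hi hj
  obtain ⟨x, y, hx, hy, hxc, hyc, hxy⟩ := hasCentralizingPair_of_not_commute
    (h_dt (a, i) (by simp)) (h_dt (b, j) (by simp)) h_even h_comm
  by_cases hxI : ∀ q ∈ (a, i) :: (b, j) :: r, q.2 ∈ I → x ∈ Subgroup.centralizer (kleinClass q.1)
  · exact .inl (.of_forall h_dt hx hxI fun p hp hpI => hxc p.1 (h_left hp hpI))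
  · push Not at hxI
    obtain ⟨q, hq, hqI, hxq⟩ := hxI
    refine .inr (.of_forall h_dt hy (fun p hp hpI => ?_) fun p hp hpI => ?_)
    · exact (hxy p.1 (h_left hp hpI) q.1 (h_right hq hqI)
        (h _ (.refl _) q hq p hp hqI hpI).symm).resolve_left hxq
    · exact hyc p.1 (h_right hp (Set.notMem_compl_iff.1 hpI))

theorem hasCableCentralizer_of_forall_fst_eq (h_dt : ∀ p ∈ c, IsDoubleTransposition p.1)
    {a : Perm (Fin 6)} (ha : IsDoubleTransposition a) (h_mem : ∀ p ∈ c, p.2 ∈ I → p.1 = a)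
    (h_notMem : ∀ p ∈ c, p.2 ∉ I → Commute a p.1) : HasCableCentralizer I c := by
  refine .of_forall h_dt ha.ne_one (fun p hp hpI => Subgroup.mem_centralizer_iff.2 ?_) h_notMem
  intro w hw
  rw [h_mem p hp hpI] at hw
  by_cases hwa : w = a
  · rw [hwa]
  · exact (kleinClass_structure ha hw hwa).1.symm

theorem Separated.hasCableCentralizer_of_forall_commute (h : Separated I c)
    (h_dt : ∀ p ∈ c, IsDoubleTransposition p.1) {p q : Perm (Fin 6) × ι} (hp : p ∈ c)
    (hq : q ∈ c) (hpI : p.2 ∈ I) (hqI : q.2 ∉ I)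
    (h_comm : ∀ p ∈ c, ∀ q ∈ c, p.2 ∈ I → q.2 ∉ I → Commute p.1 q.1) :
    HasCableCentralizer I c ∨ HasCableCentralizer Iᶜ c := by
  have h_ne {s t : Perm (Fin 6) × ι} (hs : s ∈ c) (ht : t ∈ c) (hsI : s.2 ∈ I) (htI : t.2 ∉ I) :
      s.1 ≠ t.1 :=
    (h c (.refl c) s hs t ht hsI htI).ne (h_dt s hs).mul_self
  by_cases h_eq : ∀ s ∈ c, s.2 ∈ I → s.1 = p.1
  · exact .inl (hasCableCentralizer_of_forall_fst_eq h_dt (h_dt p hp) h_eq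
      fun t ht htI => h_comm p hp t ht hpI htI)
  · push Not at h_eq
    obtain ⟨s, hs, hsI, hsp⟩ := h_eq
    refine .inr (hasCableCentralizer_of_forall_fst_eq h_dt (h_dt q hq) (fun t ht htI => ?_)
      fun t ht htI => (h_comm t ht q hq (Set.notMem_compl_iff.1 htI) hqI).symm)
    exact eq_of_commute (h_dt s hs) (h_dt p hp) (h_dt t ht) (h_dt q hq)
      (h_comm s hs t ht hsI htI) (h_comm p hp t ht hpI htI) (h_comm s hs q hq hsI hqI)
      (h_comm p hp q hq hpI hqI) hsp (h_ne hs ht hsI htI) (h_ne hp ht hpI htI)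
      (h_ne hs hq hsI hqI) (h_ne hp hq hpI hqI)

theorem BraidEquiv.forall_isDoubleTransposition_iff (h : BraidEquiv labelConj c d) :
    (∀ p ∈ c, IsDoubleTransposition p.1) ↔ ∀ p ∈ d, IsDoubleTransposition p.1 :=
  h.forall_fst_iff fun a b => by
    rw [rightConj_eq_mulAut_conj, IsDoubleTransposition.conj_iff]

theorem Separated.exists_hasCableCentralizer (h : Separated I c)
    (h_dt : ∀ p ∈ c, IsDoubleTransposition p.1) {p q : Perm (Fin 6) × ι} (hp : p ∈ c)
    (hq : q ∈ c) (hpI : p.2 ∈ I) (hqI : q.2 ∉ I) :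
    ∃ d, BraidEquiv labelConj c d ∧ (HasCableCentralizer I d ∨ HasCableCentralizer Iᶜ d) := by
  by_cases h_comm : ∀ p ∈ c, ∀ q ∈ c, p.2 ∈ I → q.2 ∉ I → Commute p.1 q.1
  · exact ⟨c, .refl c, h.hasCableCentralizer_of_forall_commute h_dt hp hq hpI hqI h_comm⟩
  push Not at h_comm
  obtain ⟨s, hs, t, ht, hsI, htI, hst⟩ := h_comm
  have h_ne : s ≠ t := fun h_eq => htI (h_eq ▸ hsI)
  obtain ⟨r, hr | hr⟩ := BraidEquiv.exists_pull_pair (op := labelConj) hs ht h_ne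
  · exact ⟨_, hr, hasCableCentralizer_of_not_commute (h.of_braidEquiv hr)
      (hr.forall_isDoubleTransposition_iff.1 h_dt) hsI htI hst⟩
  · have h_compl := hasCableCentralizer_of_not_commute (h.of_braidEquiv hr).compl
      (hr.forall_isDoubleTransposition_iff.1 h_dt) htI (Set.notMem_compl_iff.2 hsI)
      fun h_comm => hst h_comm.symm
    rw [compl_compl] at h_compl
    exact ⟨_, hr, h_compl.symm⟩

theorem linked_of_centralizer_eq_bot [DecidableEq ι] (hc : (c.map Prod.snd).Nodup)
    (h_dt : ∀ p ∈ c, IsDoubleTransposition p.1) {i j : ι} (hi : i ∈ c.map Prod.snd)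
    (hj : j ∈ c.map Prod.snd)
    (hi_bot : Subgroup.centralizer {a | a ∈ cable kleinSplit i c} = ⊥)
    (hj_bot : Subgroup.centralizer {a | a ∈ cable kleinSplit j c} = ⊥) :
    Linked kleinSplit c i j := by
  by_contra hij
  obtain ⟨p, hp, rfl⟩ := List.mem_map.1 hi
  obtain ⟨q, hq, rfl⟩ := List.mem_map.1 hj
  have h_sep := isCabling_kleinSplit.separated_setOf_linked
    (fun s hs => (h_dt s hs).mul_self) hc p.2
  have hp_mem : p.2 ∈ {k | Linked kleinSplit c p.2 k} := BraidEquiv.refl _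
  obtain ⟨d, hd, h_cent⟩ := h_sep.exists_hasCableCentralizer h_dt hp hq hp_mem hij
  have hd_dt := hd.forall_isDoubleTransposition_iff.1 h_dt
  rw [(isCabling_kleinSplit.cable_braidEquiv _ hd).centralizer_eq] at hi_bot hj_bot
  exact h_cent.elim (fun h => h.centralizer_cable_ne_bot hd_dt hp_mem hi_bot)
    fun h => h.centralizer_cable_ne_bot hd_dt hij hj_bot

theorem IsReduciblePair.braidEquiv_cable [DecidableEq ι] {u v : Perm (Fin 6)}
    (h : IsReduciblePair u v) {i : ι} (hi : i ∉ r.map Prod.snd) :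
    BraidEquiv rightConj (u :: v :: r.map Prod.fst) (cable kleinSplit i ((u * v, i) :: r)) := by
  rw [cable_cons_of_notMem _ hi]
  exact h.braidEquiv_kleinSplit.append_right _

theorem IsReduciblePair.braidEquiv_of_mul {u v u' v' : Perm (Fin 6)} {L M : List (Perm (Fin 6))}
    (h : IsReduciblePair u v) (h' : IsReduciblePair u' v')
    (hL : ∀ a ∈ L, IsDoubleTransposition a)
    (h_bot : Subgroup.centralizer {a | a ∈ u :: v :: L} = ⊥)
    (h_bot' : Subgroup.centralizer {a | a ∈ u' :: v' :: M} = ⊥)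
    (h_red : BraidEquiv rightConj (u * v :: L) (u' * v' :: M)) :
    BraidEquiv rightConj (u :: v :: L) (u' :: v' :: M) := by
  set r := L.zipIdx 1
  have hr_fst : r.map Prod.fst = L := List.zipIdx_map_fst 1 L
  have hr_snd : r.map Prod.snd = List.range' 1 L.length := List.zipIdx_map_snd 1 L
  have h_zero : 0 ∉ r.map Prod.snd := by
    simp [hr_snd]
  have hc : (((u * v, 0) :: r).map Prod.snd).Nodup :=
    List.nodup_cons.2 ⟨h_zero, hr_snd ▸ List.nodup_range'⟩
  have h_dt : ∀ p ∈ (u * v, 0) :: r, IsDoubleTransposition p.1 :=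
    List.forall_mem_cons.2 ⟨h.isDoubleTransposition_mul, fun p hp =>
      hL p.1 (hr_fst ▸ List.mem_map_of_mem hp)⟩
  obtain ⟨_, hd, hcd⟩ :=
    h_red.exists_labelled (c := (u * v, 0) :: r) (by rw [List.map_cons, hr_fst])
  obtain ⟨⟨_, j⟩, s, rfl, rfl, rfl⟩ := List.map_eq_cons_iff.1 hd
  have h_cable := hr_fst ▸ h.braidEquiv_cable h_zero
  have h_cable' := (h'.braidEquiv_cable
    (List.nodup_cons.1 (hcd.labels_perm.nodup_iff.1 hc)).1).trans
    (isCabling_kleinSplit.cable_braidEquiv j hcd).symm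
  rw [h_cable.centralizer_eq] at h_bot
  rw [h_cable'.centralizer_eq] at h_bot'
  exact (h_cable.trans (linked_of_centralizer_eq_bot hc h_dt (by simp)
    (hcd.labels_perm.mem_iff.2 (by simp)) h_bot h_bot')).trans h_cable'.symm

end Linking

section NielsenClass

open Equiv Equiv.Perm

theorem centralizer_alternatingGroup_eq_bot {α : Type*} [Fintype α] [DecidableEq α]
    (hα : 4 ≤ Fintype.card α) :
    Subgroup.centralizer (alternatingGroup α : Set (Perm α)) = ⊥ := by
  have exists_avoiding (s : Finset α) (hs : s.card ≤ 3) : ∃ a, a ∉ s := by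
    by_contra! h
    rw [← Finset.card_univ, ← Finset.eq_univ_of_forall h] at hα
    lia
  rw [eq_bot_iff]
  intro x hx
  by_contra hx_one
  obtain ⟨i, hi⟩ : ∃ i, x i ≠ i := not_forall.1 fun h => hx_one (Perm.ext h)
  obtain ⟨j, hj⟩ := exists_avoiding {i, x i} (Finset.card_le_two.trans (by decide))
  obtain ⟨k, hk⟩ := exists_avoiding {i, x i, j} Finset.card_le_three
  simp only [Finset.mem_insert, Finset.mem_singleton, not_or] at hj hk
  have h_mem : swap (x i) j * swap (x i) k ∈ alternatingGroup α :=
    (isThreeCycle_swap_mul_swap_same (Ne.symm hj.2) (Ne.symm hk.2.1)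
      (Ne.symm hk.2.2)).mem_alternatingGroup
  have h_comm := Perm.congr_fun (Subgroup.mem_centralizer_iff.1 hx _ h_mem) i
  simp only [Perm.mul_apply, swap_apply_left, swap_apply_of_ne_of_ne hk.2.1 hk.2.2,
    swap_apply_of_ne_of_ne hi.symm (Ne.symm hk.1),
    swap_apply_of_ne_of_ne hi.symm (Ne.symm hj.1)] at h_comm
  exact hk.2.1 h_comm

theorem isDoubleTransposition_of_mem_nielsenSet {n : ℕ} {g : Fin n → Perm (Fin 6)}
    (hg : g ∈ NielsenSet n) (i : Fin n) : IsDoubleTransposition (g i) :=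
  ⟨mem_alternatingGroup.1 (hg.1 i), hg.2.1 i⟩

theorem centralizer_range_of_mem_nielsenSet {n : ℕ} {g : Fin n → Perm (Fin 6)}
    (hg : g ∈ NielsenSet n) : Subgroup.centralizer (Set.range g) = ⊥ := by
  rw [← Subgroup.centralizer_closure, hg.2.2.2]
  exact centralizer_alternatingGroup_eq_bot (by simp)

end NielsenClass

theorem stmt_15_general {k : ℕ} {g₀ g₁ h₀ h₁ : Equiv.Perm (Fin 6)}
    {gr hr : Fin k → Equiv.Perm (Fin 6)} (hg : IsReduciblePair g₀ g₁) (hh : IsReduciblePair h₀ h₁)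
    (hgr : ∀ i, IsDoubleTransposition (gr i))
    (hg_bot : Subgroup.centralizer (Set.range (Fin.cons g₀ (Fin.cons g₁ gr) : Fin (k + 2) → _)) = ⊥)
    (hh_bot : Subgroup.centralizer (Set.range (Fin.cons h₀ (Fin.cons h₁ hr) : Fin (k + 2) → _)) = ⊥)
    (hred : HurwitzEquiv (Fin.cons (g₀ * g₁) gr) (Fin.cons (h₀ * h₁) hr)) :
    HurwitzEquiv (Fin.cons g₀ (Fin.cons g₁ gr)) (Fin.cons h₀ (Fin.cons h₁ hr)) := by
  have h_range {n : ℕ} (f : Fin n → Equiv.Perm (Fin 6)) : Set.range f = {a | a ∈ List.ofFn f} :=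
    Set.ext fun a => (List.mem_ofFn' f a).symm
  rw [h_range] at hg_bot hh_bot
  rw [hurwitzEquiv_iff_braidEquiv_ofFn] at hred ⊢
  simp only [List.ofFn_succ, Fin.cons_zero, Fin.cons_succ] at hg_bot hh_bot hred ⊢
  exact hg.braidEquiv_of_mul hh (List.forall_mem_ofFn_iff.2 hgr) hg_bot hh_bot hred

/-- Lifting Hurwitz equivalences through `1`-reductions: if two Nielsen tuples
of length `k + 2 > 5` each admit a `1`-reduction in their first two entries and
the reduced tuples are Hurwitz-equivalent, then so are the original tuples. -/
theorem stmt_15 (k : ℕ) (hk : 5 < k + 2)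
    (g₀ g₁ h₀ h₁ : Equiv.Perm (Fin 6)) (gr hr : Fin k → Equiv.Perm (Fin 6))
    (hgNi : Fin.cons g₀ (Fin.cons g₁ gr) ∈ NielsenSet (k + 2))
    (hhNi : Fin.cons h₀ (Fin.cons h₁ hr) ∈ NielsenSet (k + 2))
    (hgne : g₀ ≠ g₁) (hgfix : FixedPts g₀ = FixedPts g₁)
    (hhne : h₀ ≠ h₁) (hhfix : FixedPts h₀ = FixedPts h₁)
    (hred : HurwitzEquiv (Fin.cons (g₀ * g₁) gr) (Fin.cons (h₀ * h₁) hr)) :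
    HurwitzEquiv (Fin.cons g₀ (Fin.cons g₁ gr)) (Fin.cons h₀ (Fin.cons h₁ hr)) := by
  have hg := isDoubleTransposition_of_mem_nielsenSet hgNi
  have hh := isDoubleTransposition_of_mem_nielsenSet hhNi
  exact stmt_15_general ⟨hg 0, hg 1, hgne, hgfix⟩ ⟨hh 0, hh 1, hhne, hhfix⟩
    (fun i => hg i.succ.succ) (centralizer_range_of_mem_nielsenSet hgNi)
    (centralizer_range_of_mem_nielsenSet hhNi) hred
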